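/- Let f be a monotone, normalized, submodular function on a finite ground set V with f({j}) > 0 for every j ∈ V, let 𝒞 be a nonempty family of subsets of V, and let X* be a minimizer of f over 𝒞 with X* nonempty. If X̂ ∈ 𝒞 satisfies Σ_{j∈X̂} f({j}) ≤ β · min_{X∈𝒞} Σ_{j∈X} f({j}) for some β ≥ 1, then f(X̂) ≤ (β · |X*| / (1 + (|X*| − 1)(1 − κ_f(X*)))) · f(X*). -/

import Mathlib

/-!
Write `X = X*`, `n = |X|` and `m = 1 - κ_f(X)`, the least ratio `f(j | X \ {j}) / f({j})` over `X`.
By submodularity each gain along a chain inside `X` is at least the final gain, hence at least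
`m * f({i})` (`add_mul_sum_le`). Starting the chain at a single `j ∈ X` gives
`f(X) ≥ f({j}) + m * ∑_{i ∈ X \ {j}} f({i})`, and summing this over all `j ∈ X` yields
`n * f(X) ≥ (1 + (n - 1) m) * ∑_{j ∈ X} f({j})`. The guarantee follows by combining this with
subadditivity, `f(X̂) ≤ ∑_{j ∈ X̂} f({j}) ≤ β * ∑_{j ∈ X} f({j})`.
-/

open Finset

theorem le_sum_singleton {V : Type*} [DecidableEq V] (f : Finset V → ℝ)
    (hsub : ∀ S T : Finset V, f S + f T ≥ f (S ∪ T) + f (S ∩ T))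
    (hnorm : f ∅ = 0) (S : Finset V) : f S ≤ ∑ j ∈ S, f {j} := by
  induction S using Finset.induction_on with
  | empty => simp [hnorm]
  | insert a S ha ih =>
    have h := hsub {a} S
    rw [Finset.singleton_inter_of_notMem ha, hnorm, ← Finset.insert_eq] at h
    rw [Finset.sum_insert ha]
    linarith

/-- If every final gain in `X` is at least `m` times the singleton value, then so is every
gain inside `X`, so enlarging `S` by `T` gains at least `m * ∑ i ∈ T, f {i}`. -/
theorem add_mul_sum_le {V : Type*} [DecidableEq V] (f : Finset V → ℝ)
    (hsub : ∀ S T : Finset V, f S + f T ≥ f (S ∪ T) + f (S ∩ T))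
    (X : Finset V) (m : ℝ) (hm : ∀ j ∈ X, m * f {j} ≤ f X - f (X \ {j}))
    (S : Finset V) (hS : S ⊆ X) (T : Finset V) (hT : T ⊆ X) (hST : Disjoint S T) :
    f S + m * ∑ i ∈ T, f {i} ≤ f (S ∪ T) := by
  induction T using Finset.induction_on with
  | empty => simp
  | insert a T ha ih =>
    rw [Finset.insert_subset_iff] at hT
    rw [Finset.disjoint_insert_right] at hST
    have h1 := ih hT.2 hST.2
    have h2 := hm a hT.1
    -- the two sets have union `X` and intersection `S ∪ T`
    have h3 := hsub (S ∪ insert a T) (X \ {a})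
    have e1 : (S ∪ insert a T) ∪ (X \ {a}) = X := by
      ext x
      have := @hS x
      have := @hT.2 x
      have := hT.1
      grind
    have e2 : (S ∪ insert a T) ∩ (X \ {a}) = S ∪ T := by
      ext x
      have := @hS x
      have := @hT.2 x
      grind
    rw [e1, e2] at h3
    rw [Finset.sum_insert ha]
    linarith

/-- The pointwise bounds from `add_mul_sum_le` started at `{j}`, summed over `j ∈ X`. -/
theorem mul_sum_singleton_le {V : Type*} [DecidableEq V] (f : Finset V → ℝ)
    (hsub : ∀ S T : Finset V, f S + f T ≥ f (S ∪ T) + f (S ∩ T))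
    (X : Finset V) (m : ℝ) (hm : ∀ j ∈ X, m * f {j} ≤ f X - f (X \ {j})) :
    (1 + ((X.card : ℝ) - 1) * m) * ∑ j ∈ X, f {j} ≤ X.card * f X := by
  have h : ∀ j ∈ X, f {j} + m * (∑ i ∈ X, f {i} - f {j}) ≤ f X := by
    intro j hj
    have h1 := add_mul_sum_le f hsub X m hm {j} (by simpa using hj) (X.erase j)
      (Finset.erase_subset _ _) (by simp)
    rw [← Finset.insert_eq, Finset.insert_erase hj] at h1
    rw [← Finset.add_sum_erase X (fun i => f {i}) hj]
    linarith
  have h2 := Finset.sum_le_sum h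
  simp only [Finset.sum_add_distrib, ← Finset.mul_sum, Finset.sum_sub_distrib,
    Finset.sum_const, nsmul_eq_mul] at h2
  linarith

/-- Corollary 3 (MUB): if `X̂ ∈ 𝒞` is a `β`-approximate minimizer of the
modular upper bound `X ↦ ∑_{j∈X} f {j}` over `𝒞`, then
`f(X̂) ≤ (β |X*| / (1 + (|X*|-1)(1-κ_f(X*)))) f(X*)`. -/
theorem mub_minimization_guarantee
    {V : Type*} [Fintype V] [DecidableEq V]
    (f : Finset V → ℝ)
    (hsub : ∀ S T : Finset V, f S + f T ≥ f (S ∪ T) + f (S ∩ T))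
    (hmono : ∀ S T : Finset V, S ⊆ T → f S ≤ f T)
    (hnorm : f ∅ = 0)
    (hpos : ∀ j : V, 0 < f {j})
    (C : Finset (Finset V)) (hC : C.Nonempty)
    (Xstar : Finset V) (hXstar : Xstar ∈ C) (hopt : ∀ X ∈ C, f Xstar ≤ f X)
    (hXstarne : Xstar.Nonempty)
    (β : ℝ) (hβ : 1 ≤ β)
    (Xhat : Finset V) (hXhat : Xhat ∈ C)
    (happ : ∀ X ∈ C, (∑ j ∈ Xhat, f {j}) ≤ β * ∑ j ∈ X, f {j})
    (κs : ℝ)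
    (hκs : κs = 1 - Xstar.inf' hXstarne
      (fun j => (f Xstar - f (Xstar \ {j})) / f {j})) :
    f Xhat ≤ (β * (Xstar.card : ℝ) /
      (1 + ((Xstar.card : ℝ) - 1) * (1 - κs))) * f Xstar := by
  set m := Xstar.inf' hXstarne (fun j => (f Xstar - f (Xstar \ {j})) / f {j}) with hmdef
  have hκ : 1 - κs = m := by rw [hκs]; ring
  rw [hκ]
  have hm : ∀ j ∈ Xstar, m * f {j} ≤ f Xstar - f (Xstar \ {j}) := fun j hj =>
    (le_div_iff₀ (hpos j)).1 (Finset.inf'_le _ hj)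
  have hm0 : 0 ≤ m := Finset.le_inf' _ _ fun j _ =>
    div_nonneg (sub_nonneg.2 (hmono _ _ Finset.sdiff_subset)) (hpos j).le
  have hn : (1 : ℝ) ≤ Xstar.card := by exact_mod_cast hXstarne.card_pos
  have hD : 0 < 1 + ((Xstar.card : ℝ) - 1) * m := by
    have := mul_nonneg (sub_nonneg.2 hn) hm0
    linarith
  have hkey := mul_sum_singleton_le f hsub Xstar m hm
  refine (le_sum_singleton f hsub hnorm Xhat).trans ((happ Xstar hXstar).trans ?_)
  rw [div_mul_eq_mul_div, le_div_iff₀ hD]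
  have := mul_le_mul_of_nonneg_left hkey (zero_le_one.trans hβ)
  linarith
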